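/- Let A = ⊕_{i∈ℤ} A_i be a ℤ-graded ring with A_i = 0 for all i < 0, and assume the degree-zero part A_0 is a left artinian ring. If ℓ ∈ ℕ is such that every graded simple right A-module has projective dimension at most ℓ as a right A-module, then every ℤ-graded left A-module has projective dimension at most ℓ as a left A-module. -/

import Mathlib

/-!
Statement 1.  Let `A = ⊕_{i∈ℤ} A_i` be a ℤ-graded ring with `A_i = 0` for `i < 0` and with
`A_0` left artinian.  If every graded simple right `A`-module has projective dimension at
most `ℓ`, then every ℤ-graded left `A`-module has projective dimension at most `ℓ`.
-/

universe u

open DirectSum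

section ProjDim

/-- `pdLE R n M` means `M` admits a projective resolution of length at most `n`
(in the category of all `R`-modules). -/
def pdLE (R : Type u) [Ring R] : ℕ → ∀ (M : Type u) [AddCommGroup M] [Module R M], Prop
  | 0, M, _, _ => Module.Projective R M
  | n+1, M, _, _ => ∃ (P : Type u) (_ : AddCommGroup P) (_ : Module R P)
      (f : P →ₗ[R] M), Module.Projective R P ∧ Function.Surjective f ∧
      pdLE R n ↥(LinearMap.ker f)

/-- The projective dimension of a module, as an element of `ℕ∞` (`⊤` if no finite
projective resolution exists). -/
noncomputable def projDim (R : Type u) [Ring R] (M : Type u) [AddCommGroup M]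
    [Module R M] : ℕ∞ :=
  ⨅ (n : ℕ) (_ : pdLE R n M), (n : ℕ∞)

/-- The (left) global dimension of a ring: the supremum of the projective dimensions of all
left modules.  (The right global dimension of `A` is `globalDim Aᵐᵒᵖ`.) -/
noncomputable def globalDim (R : Type u) [Ring R] : ℕ∞ :=
  ⨆ (M : ModuleCat.{u} R), projDim R M

end ProjDim

section Graded

variable (A : Type u) [Ring A] (𝒜 : ℤ → AddSubgroup A)

/-- A grading `ℳ` on a left `A`-module `M` compatible with the grading `𝒜` on `A`:
`M = ⊕_j ℳ j` and `𝒜 i • ℳ j ⊆ ℳ (i + j)`. -/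
def IsGradedModule (M : Type u) [AddCommGroup M] [Module A M]
    (ℳ : ℤ → AddSubgroup M) : Prop :=
  DirectSum.IsInternal ℳ ∧
    ∀ (i j : ℤ) (a : A) (m : M), a ∈ 𝒜 i → m ∈ ℳ j → a • m ∈ ℳ (i + j)

/-- A grading on a right `A`-module (= left `Aᵐᵒᵖ`-module): `ℳ j • 𝒜 i ⊆ ℳ (j + i)`. -/
def IsGradedRightModule (M : Type u) [AddCommGroup M] [Module Aᵐᵒᵖ M]
    (ℳ : ℤ → AddSubgroup M) : Prop :=
  DirectSum.IsInternal ℳ ∧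
    ∀ (i j : ℤ) (a : A) (m : M), a ∈ 𝒜 i → m ∈ ℳ j → (MulOpposite.op a) • m ∈ ℳ (j + i)

/-- A submodule `p` is graded (w.r.t. the grading `ℳ`) if it is the (internal direct) sum of
its homogeneous parts `p ∩ ℳ j`. -/
def IsGradedSubmodule {R : Type*} [Ring R] {M : Type u} [AddCommGroup M] [Module R M]
    (ℳ : ℤ → AddSubgroup M) (p : Submodule R M) : Prop :=
  p.toAddSubgroup = ⨆ j : ℤ, (p.toAddSubgroup ⊓ ℳ j)

/-- A graded-simple left `A`-module: a nonzero graded module whose only graded submodules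
are `⊥` and `⊤`. -/
def IsGradedSimple (M : Type u) [AddCommGroup M] [Module A M]
    (ℳ : ℤ → AddSubgroup M) : Prop :=
  IsGradedModule A 𝒜 M ℳ ∧ Nontrivial M ∧
    ∀ p : Submodule A M, IsGradedSubmodule ℳ p → p = ⊥ ∨ p = ⊤

/-- A graded-simple right `A`-module. -/
def IsGradedSimpleRight (M : Type u) [AddCommGroup M] [Module Aᵐᵒᵖ M]
    (ℳ : ℤ → AddSubgroup M) : Prop :=
  IsGradedRightModule A 𝒜 M ℳ ∧ Nontrivial M ∧
    ∀ p : Submodule Aᵐᵒᵖ M, IsGradedSubmodule ℳ p → p = ⊥ ∨ p = ⊤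

end Graded

section ProjectiveDimension

variable {R : Type u} [Ring R]

theorem pdLE_succ (n : ℕ) : ∀ (M : Type u) [AddCommGroup M] [Module R M],
    pdLE R n M → pdLE R (n + 1) M := by
  induction n with
  | zero =>
    intro M _ _ h
    have : Subsingleton (LinearMap.ker (LinearMap.id : M →ₗ[R] M)) :=
      ⟨fun x y => Subtype.ext (x.2.trans y.2.symm)⟩
    exact ⟨M, _, _, LinearMap.id, h, Function.surjective_id,
      (inferInstance : Module.Projective R _)⟩
  | succ n ih =>
    rintro M _ _ ⟨P, _, _, f, hP, hf, hk⟩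
    exact ⟨P, _, _, f, hP, hf, ih _ hk⟩

theorem pdLE_mono {m n : ℕ} (hmn : m ≤ n) (M : Type u) [AddCommGroup M] [Module R M]
    (h : pdLE R m M) : pdLE R n M := by
  induction hmn with
  | refl => exact h
  | step _ ih => exact pdLE_succ _ M ih

theorem projDim_le_iff (n : ℕ) (M : Type u) [AddCommGroup M] [Module R M] :
    projDim R M ≤ n ↔ pdLE R n M := by
  refine ⟨fun h => ?_, fun h => iInf₂_le n h⟩
  by_contra hn
  have : ((n + 1 : ℕ) : ℕ∞) ≤ projDim R M := by
    refine le_iInf₂ fun k hk => ?_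
    have : ¬ k ≤ n := fun hkn => hn (pdLE_mono hkn M hk)
    exact_mod_cast not_le.mp this
  exact absurd (this.trans h) (by norm_cast; omega)

/-- `ExtVanishes R D n M` says that `Ext^{n+1}(M, D) = 0`, phrased through `n`-th syzygies `K`
of `M`: for every extension `N` of `K`, maps to `D` extend from the kernel of `N → K` to `N`. -/
def ExtVanishes (R : Type u) [Ring R] (D : Type u) [AddCommGroup D] [Module R D] :
    ℕ → ∀ (M : Type u) [AddCommGroup M] [Module R M], Prop
  | 0, M, _, _ => ∀ (N : Type u) [AddCommGroup N] [Module R N] (g : N →ₗ[R] M),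
      Function.Surjective g → ∀ h : LinearMap.ker g →ₗ[R] D,
        ∃ H : N →ₗ[R] D, ∀ x : LinearMap.ker g, H x = h x
  | n + 1, M, _, _ => ∀ (P : Type u) [AddCommGroup P] [Module R P] (f : P →ₗ[R] M),
      Module.Projective R P → Function.Surjective f → ExtVanishes R D n (LinearMap.ker f)

/-- Dimension shifting along a short exact sequence `0 → D → I → C → 0` with `I` injective. -/
theorem ExtVanishes.succ {D I C : Type u} [AddCommGroup D] [Module R D] [AddCommGroup I]
    [Module R I] [AddCommGroup C] [Module R C] (i : D →ₗ[R] I) (q : I →ₗ[R] C)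
    (hi : Function.Injective i) (hq : Function.Surjective q)
    (hex : LinearMap.ker q = LinearMap.range i) (hI : Module.Injective R I) (n : ℕ) :
    ∀ (M : Type u) [AddCommGroup M] [Module R M],
      ExtVanishes R C n M → ExtVanishes R D (n + 1) M := by
  induction n with
  | zero =>
    intro M _ _ hM P _ _ f hP hf N _ _ g hg h
    obtain ⟨H, hH⟩ := hI.out (LinearMap.ker g).subtype Subtype.val_injective (i ∘ₗ h)
    have hker : LinearMap.ker g ≤ LinearMap.ker (q ∘ₗ H) := fun x hx => by
      have h1 : H x = i (h ⟨x, hx⟩) := hH ⟨x, hx⟩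
      have h2 : i (h ⟨x, hx⟩) ∈ LinearMap.ker q := hex ▸ ⟨_, rfl⟩
      simpa [h1] using h2
    let c : LinearMap.ker f →ₗ[R] C :=
      (LinearMap.ker g).liftQ (q ∘ₗ H) hker ∘ₗ (g.quotKerEquivOfSurjective hg).symm.toLinearMap
    have hc : ∀ x, c (g x) = q (H x) := fun x => by
      have : (g.quotKerEquivOfSurjective hg).symm (g x) = Submodule.Quotient.mk x := by
        rw [LinearEquiv.symm_apply_eq]; rfl
      simp [c, this]
    obtain ⟨c', hc'⟩ := hM P f hf c
    obtain ⟨p, hp⟩ := Module.projective_lifting_property q c' hq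
    have hp' : ∀ x, q (p x) = c' x := fun x => LinearMap.congr_fun hp x
    let H' : N →ₗ[R] I := H - p ∘ₗ (LinearMap.ker f).subtype ∘ₗ g
    have hH' : ∀ x, H' x ∈ LinearMap.range i := fun x => by
      rw [← hex]
      simp [H', hp', hc', hc]
    let e := LinearEquiv.ofInjective i hi
    refine ⟨e.symm.toLinearMap ∘ₗ H'.codRestrict _ hH', fun x => ?_⟩
    have hx : g x = 0 := x.2
    change e.symm _ = _
    rw [LinearEquiv.symm_apply_eq]
    refine Subtype.ext ?_
    change H x - p (g x : P) = i (h x)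
    rw [hx, ZeroMemClass.coe_zero, map_zero, sub_zero]
    exact hH x
  | succ n ih =>
    intro M _ _ hM P _ _ f hP hf
    exact ih _ (hM P f hP hf)

theorem ExtVanishes.of_injective {D : Type u} [AddCommGroup D] [Module R D]
    (hD : Module.Injective R D) (n : ℕ) :
    ∀ (M : Type u) [AddCommGroup M] [Module R M], ExtVanishes R D n M := by
  induction n with
  | zero =>
    intro M _ _ N _ _ g _ h
    exact hD.out (LinearMap.ker g).subtype Subtype.val_injective h
  | succ n ih => exact fun M _ _ P _ _ f _ _ => ih _

end ProjectiveDimension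

section Duality

variable (A : Type u) [Ring A]

/-- The character group of a right module, as a left module. -/
def DualOfRight (S : Type u) [AddCommGroup S] : Type u := S →+ AddCircle (1 : ℚ)

/-- The character group of a left module, as a right module. -/
def DualOfLeft (N : Type u) [AddCommGroup N] : Type u := N →+ AddCircle (1 : ℚ)

namespace DualOfRight

variable (S : Type u) [AddCommGroup S]

instance : AddCommGroup (DualOfRight S) := inferInstanceAs (AddCommGroup (S →+ _))

instance : FunLike (DualOfRight S) S (AddCircle (1 : ℚ)) := inferInstanceAs (FunLike (S →+ _) _ _)

instance : AddMonoidHomClass (DualOfRight S) S (AddCircle (1 : ℚ)) :=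
  inferInstanceAs (AddMonoidHomClass (S →+ _) _ _)

variable {S} in
@[ext] theorem ext {f g : DualOfRight S} (h : ∀ s, f s = g s) : f = g := DFunLike.ext _ _ h

instance [Module Aᵐᵒᵖ S] : Module A (DualOfRight S) where
  smul a f := AddMonoidHom.comp f (DistribSMul.toAddMonoidHom S (MulOpposite.op a))
  one_smul f := ext fun s => congrArg f (one_smul _ s)
  mul_smul a b f := ext fun s => congrArg f (mul_smul (MulOpposite.op b) (MulOpposite.op a) s)
  smul_zero a := rfl
  smul_add a f g := rfl
  add_smul a b f := ext fun s => by
    change f ((MulOpposite.op a + MulOpposite.op b) • s) = f _ + f _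
    rw [add_smul, map_add]; rfl
  zero_smul f := ext fun s => by
    change f ((0 : Aᵐᵒᵖ) • s) = 0
    rw [zero_smul, map_zero]

variable {A S} in
theorem smul_apply [Module Aᵐᵒᵖ S] (a : A) (f : DualOfRight S) (s : S) :
    (a • f) s = f (MulOpposite.op a • s) := rfl

end DualOfRight

namespace DualOfLeft

variable (N : Type u) [AddCommGroup N]

instance : AddCommGroup (DualOfLeft N) := inferInstanceAs (AddCommGroup (N →+ _))

instance : FunLike (DualOfLeft N) N (AddCircle (1 : ℚ)) := inferInstanceAs (FunLike (N →+ _) _ _)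

instance : AddMonoidHomClass (DualOfLeft N) N (AddCircle (1 : ℚ)) :=
  inferInstanceAs (AddMonoidHomClass (N →+ _) _ _)

variable {N} in
@[ext] theorem ext {f g : DualOfLeft N} (h : ∀ s, f s = g s) : f = g := DFunLike.ext _ _ h

instance [Module A N] : Module Aᵐᵒᵖ (DualOfLeft N) where
  smul a f := AddMonoidHom.comp f (DistribSMul.toAddMonoidHom N (MulOpposite.unop a))
  one_smul f := ext fun s => congrArg f (one_smul _ s)
  mul_smul a b f := ext fun s => congrArg f (mul_smul b.unop a.unop s)
  smul_zero a := rfl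
  smul_add a f g := rfl
  add_smul a b f := ext fun s => by
    change f ((a.unop + b.unop) • s) = f _ + f _
    rw [add_smul, map_add]; rfl
  zero_smul f := ext fun s => by
    change f ((0 : A) • s) = 0
    rw [zero_smul, map_zero]

variable {A N} in
theorem smul_apply [Module A N] (a : Aᵐᵒᵖ) (f : DualOfLeft N) (s : N) :
    (a • f) s = f (a.unop • s) := rfl

end DualOfLeft

theorem exists_character_extension {B N : Type u} [AddCommGroup B] [AddCommGroup N] (i : B →+ N)
    (hi : Function.Injective i) (χ : B →+ AddCircle (1 : ℚ)) :
    ∃ ψ : N →+ AddCircle (1 : ℚ), ∀ b, ψ (i b) = χ b := by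
  obtain ⟨ψ, hψ⟩ := CharacterModule.dual_surjective_of_injective i.toIntLinearMap hi χ
  exact ⟨ψ, fun b => DFunLike.congr_fun hψ b⟩

theorem DualOfRight.injective (P : Type u) [AddCommGroup P] [Module Aᵐᵒᵖ P]
    [Module.Projective Aᵐᵒᵖ P] : Module.Injective A (DualOfRight P) := by
  refine ⟨fun B N _ _ _ _ i hi g => ?_⟩
  let r : DualOfLeft N →ₗ[Aᵐᵒᵖ] DualOfLeft B :=
    { toFun := fun ψ => AddMonoidHom.comp ψ i.toAddMonoidHom
      map_add' := fun _ _ => rfl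
      map_smul' := fun a ψ => DualOfLeft.ext fun b => congrArg ψ (i.map_smul a.unop b).symm }
  have hr : Function.Surjective r := fun χ => by
    obtain ⟨ψ, hψ⟩ := exists_character_extension i.toAddMonoidHom hi χ
    exact ⟨ψ, DualOfLeft.ext hψ⟩
  let t : P →ₗ[Aᵐᵒᵖ] DualOfLeft B :=
    { toFun := fun p => AddMonoidHom.mk' (fun b => g b p) fun b b' => by rw [map_add]; rfl
      map_add' := fun p p' => DualOfLeft.ext fun b => map_add (g b) p p'
      map_smul' := fun a p => DualOfLeft.ext fun b => by
        change g b (a • p) = g (a.unop • b) p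
        rw [g.map_smul]; rfl }
  obtain ⟨T, hT⟩ := Module.projective_lifting_property r t hr
  refine ⟨{ toFun := fun n => AddMonoidHom.mk' (fun p => T p n) fun p p' => by
                    rw [map_add]; rfl
            map_add' := fun n n' => DualOfRight.ext fun p => map_add (T p) n n'
            map_smul' := fun a n => DualOfRight.ext fun p => ?_ }, fun b => ?_⟩
  · change T p (a • n) = T (MulOpposite.op a • p) n
    rw [T.map_smul]; rfl
  · exact DualOfRight.ext fun p => DFunLike.congr_fun (LinearMap.congr_fun hT p) b

/-- A right module of projective dimension at most `n` has a dual of injective dimension at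
most `n`. -/
theorem ExtVanishes.of_pdLE_dual (n : ℕ) : ∀ (S : Type u) [AddCommGroup S] [Module Aᵐᵒᵖ S],
    pdLE Aᵐᵒᵖ n S → ∀ (M : Type u) [AddCommGroup M] [Module A M],
      ExtVanishes A (DualOfRight S) n M := by
  induction n with
  | zero =>
    intro S _ _ hS
    have : Module.Projective Aᵐᵒᵖ S := hS
    exact ExtVanishes.of_injective (DualOfRight.injective A S) 0
  | succ n ih =>
    rintro S _ _ ⟨P, _, _, f, hP, hf, hk⟩ M _ _
    let dual : ∀ {U V : Type u} [AddCommGroup U] [AddCommGroup V] [Module Aᵐᵒᵖ U]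
        [Module Aᵐᵒᵖ V], (U →ₗ[Aᵐᵒᵖ] V) → (DualOfRight V →ₗ[A] DualOfRight U) :=
      fun k =>
        { toFun := fun ψ => AddMonoidHom.comp ψ k.toAddMonoidHom
          map_add' := fun _ _ => rfl
          map_smul' := fun a ψ =>
            DualOfRight.ext fun b => congrArg ψ (k.map_smul (MulOpposite.op a) b).symm }
    refine ExtVanishes.succ (dual f) (dual (LinearMap.ker f).subtype) ?_ ?_ ?_
      (DualOfRight.injective A P) n M (ih _ hk M)
    · intro φ ψ h
      refine DualOfRight.ext fun s => ?_
      obtain ⟨p, rfl⟩ := hf s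
      exact DFunLike.congr_fun h p
    · intro χ
      obtain ⟨ψ, hψ⟩ := exists_character_extension (LinearMap.ker f).subtype.toAddMonoidHom
        Subtype.val_injective χ
      exact ⟨ψ, DualOfRight.ext hψ⟩
    · ext ψ
      constructor
      · intro h
        have hker : f.toAddMonoidHom.ker ≤ AddMonoidHom.ker ψ := fun x hx =>
          DFunLike.congr_fun (LinearMap.mem_ker.mp h) (⟨x, hx⟩ : LinearMap.ker f)
        exact ⟨f.toAddMonoidHom.liftOfSurjective hf ⟨ψ, hker⟩, DualOfRight.ext fun p =>
          AddMonoidHom.liftOfRightInverse_comp_apply _ _ (Function.rightInverse_surjInv hf) ⟨ψ, hker⟩ p⟩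
      · rintro ⟨χ, rfl⟩
        refine DualOfRight.ext fun x => ?_
        change χ (f x) = 0
        rw [show f x = 0 from x.2, map_zero]

end Duality

section Filtration

variable {R : Type u} [Ring R]

/-- An exhaustive filtration of `X` by submodules indexed by `ℕ`, starting at `⊥`, with
successive quotients `Q k`. -/
structure ExhaustiveFiltration (R : Type u) [Ring R] (X : Type u) [AddCommGroup X] [Module R X]
    (Q : ℕ → Type u) [∀ k, AddCommGroup (Q k)] [∀ k, Module R (Q k)] where
  T : ℕ → Submodule R X
  zero : T 0 = ⊥
  le_succ : ∀ k, T k ≤ T (k + 1)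
  exhaustive : ∀ x, ∃ k, x ∈ T k
  q : ∀ k, T (k + 1) →ₗ[R] Q k
  surjective : ∀ k, Function.Surjective (q k)
  ker : ∀ k (x : T (k + 1)), q k x = 0 ↔ (x : X) ∈ T k

/-- The finitely supported families vanishing from index `k` on. -/
def truncatedFamilies (R : Type u) [Ring R] (P : ℕ → Type u) [∀ k, AddCommGroup (P k)]
    [∀ k, Module R (P k)] (k : ℕ) : Submodule R (Π₀ k, P k) where
  carrier := {l | ∀ j, k ≤ j → l j = 0}
  add_mem' hl hl' j hj := by simp [hl j hj, hl' j hj]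
  zero_mem' j _ := rfl
  smul_mem' a l hl j hj := by simp [hl j hj]

section Truncated

variable {P : ℕ → Type u} [∀ k, AddCommGroup (P k)] [∀ k, Module R (P k)]

theorem truncatedFamilies_zero : truncatedFamilies R P 0 = ⊥ :=
  eq_bot_iff.mpr fun _ hl => DFinsupp.ext fun j => hl j j.zero_le

theorem truncatedFamilies_le_succ (k : ℕ) :
    truncatedFamilies R P k ≤ truncatedFamilies R P (k + 1) :=
  fun _ hl j hj => hl j (by omega)

theorem exists_mem_truncatedFamilies (l : Π₀ k, P k) : ∃ k, l ∈ truncatedFamilies R P k := by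
  classical
  refine ⟨l.support.sup id + 1, fun j hj => ?_⟩
  by_contra h
  have := Finset.le_sup (f := id) (DFinsupp.mem_support_iff.mpr h)
  simp only [id] at this
  omega

theorem mem_truncatedFamilies_iff_of_succ {l : Π₀ k, P k} {k : ℕ}
    (hl : l ∈ truncatedFamilies R P (k + 1)) : l ∈ truncatedFamilies R P k ↔ l k = 0 := by
  refine ⟨fun h => h k le_rfl, fun h j hj => ?_⟩
  obtain rfl | hj := hj.eq_or_lt
  · exact h
  · exact hl j hj

theorem sub_single_mem_truncatedFamilies {l : Π₀ k, P k} {k : ℕ}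
    (hl : l ∈ truncatedFamilies R P (k + 1)) :
    l - DFinsupp.single k (l k) ∈ truncatedFamilies R P k := fun j hj => by
  obtain rfl | hj := hj.eq_or_lt
  · simp
  · simp [DFinsupp.single_apply, hj.ne, hl j hj]

theorem single_mem_truncatedFamilies {k : ℕ} (p : P k) :
    DFinsupp.single k p ∈ truncatedFamilies R P (k + 1) := fun j hj => by
  simp [DFinsupp.single_apply, show k ≠ j by omega]

end Truncated

namespace ExhaustiveFiltration

variable {X : Type u} [AddCommGroup X] [Module R X]
  {Q : ℕ → Type u} [∀ k, AddCommGroup (Q k)] [∀ k, Module R (Q k)]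

theorem subsingleton (E : ExhaustiveFiltration R X Q) (h : ∀ k, Subsingleton (Q k)) :
    Subsingleton X := by
  have hT : ∀ k, E.T k = ⊥ := fun k => by
    induction k with
    | zero => exact E.zero
    | succ k ih =>
      refine eq_bot_iff.mpr fun x hx => ?_
      rw [← ih]
      exact (E.ker k ⟨x, hx⟩).mp (Subsingleton.elim _ _)
  have h0 : ∀ x : X, x = 0 := fun x => by
    obtain ⟨k, hk⟩ := E.exhaustive x
    rw [hT k] at hk
    exact hk
  exact ⟨fun x y => (h0 x).trans (h0 y).symm⟩

/-- Surjections onto the successive quotients of a filtration assemble to a surjection from the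
direct sum, whose kernel is filtered by the kernels. -/
theorem exists_cover (E : ExhaustiveFiltration R X Q) {P : ℕ → Type u}
    [∀ k, AddCommGroup (P k)] [∀ k, Module R (P k)] [∀ k, Module.Projective R (P k)]
    (f : ∀ k, P k →ₗ[R] Q k) (hf : ∀ k, Function.Surjective (f k)) :
    ∃ G : (Π₀ k, P k) →ₗ[R] X, Function.Surjective G ∧
      Nonempty (ExhaustiveFiltration R (LinearMap.ker G) fun k => LinearMap.ker (f k)) := by
  choose g hg using fun k => Module.projective_lifting_property (E.q k) (f k) (E.surjective k)
  have hqg : ∀ k p, E.q k (g k p) = f k p := fun k p => LinearMap.congr_fun (hg k) p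
  let G : (Π₀ k, P k) →ₗ[R] X := DFinsupp.lsum ℕ fun k => (E.T (k + 1)).subtype ∘ₗ g k
  have hG : ∀ k p, G (DFinsupp.single k p) = g k p := fun k p => by simp [G]
  have hmem : ∀ k, ∀ l ∈ truncatedFamilies R P k, G l ∈ E.T k := fun k => by
    induction k with
    | zero =>
      intro l hl
      rw [truncatedFamilies_zero, Submodule.mem_bot] at hl
      simp [hl]
    | succ k ih =>
      intro l hl
      rw [← sub_add_cancel l (DFinsupp.single k (l k)), map_add, hG]
      exact add_mem (E.le_succ k (ih _ (sub_single_mem_truncatedFamilies hl))) (g k _).2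
  have hlift : ∀ k, ∀ x ∈ E.T k, ∃ l ∈ truncatedFamilies R P k, G l = x := fun k => by
    induction k with
    | zero =>
      intro x hx
      rw [E.zero, Submodule.mem_bot] at hx
      exact ⟨0, zero_mem _, by simp [hx]⟩
    | succ k ih =>
      intro x hx
      obtain ⟨p, hp⟩ := hf k (E.q k ⟨x, hx⟩)
      obtain ⟨l, hl, hlx⟩ := ih (x - g k p)
        ((E.ker k (⟨x, hx⟩ - g k p)).mp (by rw [map_sub, hqg, hp, sub_self]))
      exact ⟨l + DFinsupp.single k p, add_mem (truncatedFamilies_le_succ k hl)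
        (single_mem_truncatedFamilies p), by rw [map_add, hlx, hG, sub_add_cancel]⟩
  have hlead : ∀ k, ∀ l ∈ truncatedFamilies R P (k + 1), G l = 0 → f k (l k) = 0 := by
    intro k l hl hl0
    have := hmem k _ (sub_single_mem_truncatedFamilies hl)
    rw [map_sub, hl0, zero_sub, neg_mem_iff, hG] at this
    rw [← hqg]
    exact (E.ker k _).mpr this
  refine ⟨G, fun x => ?_, ⟨
    { T := fun k => (truncatedFamilies R P k).comap (LinearMap.ker G).subtype
      zero := ?_
      le_succ := fun k => Submodule.comap_mono (truncatedFamilies_le_succ k)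
      exhaustive := fun l => exists_mem_truncatedFamilies (R := R) (l : Π₀ k, P k)
      q := fun k => ((DFinsupp.lapply k ∘ₗ (LinearMap.ker G).subtype) ∘ₗ
        Submodule.subtype _).codRestrict _ fun l => hlead k _ l.2 l.1.2
      surjective := fun k p => ?_
      ker := fun k l => ?_ }⟩⟩
  · obtain ⟨k, hk⟩ := E.exhaustive x
    obtain ⟨l, -, hl⟩ := hlift k x hk
    exact ⟨l, hl⟩
  · rw [truncatedFamilies_zero]
    exact eq_bot_iff.mpr fun l hl => Subtype.ext hl
  · obtain ⟨l, hl, hlG⟩ := hlift k (g k p) ((E.ker k _).mp ((hqg k p).trans p.2))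
    have hker : DFinsupp.single k (p : P k) - l ∈ LinearMap.ker G := by
      rw [LinearMap.mem_ker, map_sub, hG, hlG, sub_self]
    refine ⟨⟨⟨_, hker⟩, sub_mem (single_mem_truncatedFamilies _)
      (truncatedFamilies_le_succ k hl)⟩, Subtype.ext ?_⟩
    change (DFinsupp.single k (p : P k) - l) k = p
    simp [hl k le_rfl]
  · exact Subtype.ext_iff.trans (mem_truncatedFamilies_iff_of_succ (R := R) l.2).symm

/-- Auslander's lemma: projective dimension is bounded by that of the successive quotients. -/
theorem pdLE (n : ℕ) : ∀ {X : Type u} [AddCommGroup X] [Module R X]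
    {Q : ℕ → Type u} [∀ k, AddCommGroup (Q k)] [∀ k, Module R (Q k)]
    (_ : ExhaustiveFiltration R X Q), (∀ k, _root_.pdLE R n (Q k)) → _root_.pdLE R n X := by
  induction n with
  | zero =>
    intro X _ _ Q _ _ E hQ
    have : ∀ k, Module.Projective R (Q k) := hQ
    obtain ⟨G, hG, ⟨E'⟩⟩ := E.exists_cover (fun k => LinearMap.id (R := R) (M := Q k))
      fun k => Function.surjective_id
    have := E'.subsingleton fun k => ⟨fun x y => Subtype.ext (x.2.trans y.2.symm)⟩
    have hinj : Function.Injective G :=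
      LinearMap.ker_eq_bot.mp (Submodule.subsingleton_iff_eq_bot.mp this)
    exact Module.Projective.of_equiv (LinearEquiv.ofBijective G ⟨hinj, hG⟩)
  | succ n ih =>
    intro X _ _ Q _ _ E hQ
    choose P _ _ f hP hf hk using hQ
    obtain ⟨G, hG, ⟨E'⟩⟩ := E.exists_cover f hf
    exact ⟨_, _, _, G, inferInstance, hG, ih E' hk⟩

end ExhaustiveFiltration

end Filtration

section Projections

variable {A : Type u} [Ring A] {𝒜 : ℤ → AddSubgroup A}

/-- A grading on a left module, given by the projections onto its homogeneous components. -/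
structure GradingProj (𝒜 : ℤ → AddSubgroup A) (M : Type u) [AddCommGroup M] [Module A M] where
  π : ℤ → M →+ M
  orth : ∀ d e m, π d (π e m) = if d = e then π e m else 0
  exists_sum : ∀ m, ∃ s : Finset ℤ, ∑ d ∈ s, π d m = m
  smul : ∀ i d a m, a ∈ 𝒜 i → π (i + d) (a • m) = a • π d m

namespace GradingProj

variable {M : Type u} [AddCommGroup M] [Module A M] (G : GradingProj 𝒜 M)

theorem idem (d : ℤ) (m : M) : G.π d (G.π d m) = G.π d m := by rw [G.orth, if_pos rfl]

theorem smul_sub {i : ℤ} {a : A} (ha : a ∈ 𝒜 i) (d : ℤ) (m : M) :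
    G.π d (a • m) = a • G.π (d - i) m := by
  rw [← G.smul i _ a m ha, add_sub_cancel]

theorem exists_finset (m : M) :
    ∃ s : Finset ℤ, (∀ d ∉ s, G.π d m = 0) ∧ ∑ d ∈ s, G.π d m = m := by
  obtain ⟨s, hs⟩ := G.exists_sum m
  refine ⟨s, fun d hd => ?_, hs⟩
  rw [← hs, map_sum]
  refine Finset.sum_eq_zero fun e he => ?_
  rw [G.orth, if_neg]
  rintro rfl
  exact hd he

theorem mem_of_forall_mem {m : M} (N : AddSubgroup M) (h : ∀ d, G.π d m ∈ N) : m ∈ N := by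
  obtain ⟨s, hs⟩ := G.exists_sum m
  rw [← hs]
  exact sum_mem fun d _ => h d

/-- The grading has no components in degrees below `d₀`. -/
def BoundedBelow (d₀ : ℤ) : Prop := ∀ d < d₀, ∀ m, G.π d m = 0

/-- The grading of a quotient by a graded submodule. -/
noncomputable def ofSurjective {Q : Type u} [AddCommGroup Q] [Module A Q] (g : M →ₗ[A] Q)
    (hg : Function.Surjective g) (hker : ∀ m, g m = 0 → ∀ d, g (G.π d m) = 0) :
    GradingProj 𝒜 Q :=
  have key : ∀ d m m', g m = g m' → g (G.π d m) = g (G.π d m') := fun d m m' h => by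
    rw [← sub_eq_zero, ← map_sub, ← map_sub]
    exact hker _ (by rw [map_sub, h, sub_self]) d
  have hinv : ∀ d m, g (G.π d (Function.surjInv hg (g m))) = g (G.π d m) := fun d m =>
    key _ _ _ (Function.surjInv_eq hg _)
  { π := fun d => AddMonoidHom.mk' (fun q => g (G.π d (Function.surjInv hg q))) fun q q' => by
      rw [← map_add, ← map_add]
      exact key _ _ _ (by simp [Function.surjInv_eq hg])
    orth := fun d e q => by
      simp only [AddMonoidHom.mk'_apply, hinv, G.orth]
      split_ifs <;> simp
    exists_sum := fun q => by
      obtain ⟨m, rfl⟩ := hg q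
      obtain ⟨s, hs⟩ := G.exists_sum m
      refine ⟨s, ?_⟩
      simp only [AddMonoidHom.mk'_apply, hinv]
      rw [← map_sum, hs]
    smul := fun i d a q ha => by
      obtain ⟨m, rfl⟩ := hg q
      simp only [AddMonoidHom.mk'_apply, hinv, ← map_smul]
      rw [← G.smul i d a m ha] }

theorem ofSurjective_apply {Q : Type u} [AddCommGroup Q] [Module A Q] (g : M →ₗ[A] Q)
    (hg : Function.Surjective g) (hker : ∀ m, g m = 0 → ∀ d, g (G.π d m) = 0) (d : ℤ) (m : M) :
    (G.ofSurjective g hg hker).π d (g m) = g (G.π d m) := by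
  change g (G.π d (Function.surjInv hg (g m))) = _
  rw [← sub_eq_zero, ← map_sub, ← map_sub]
  exact hker _ (by simp [Function.surjInv_eq hg]) d

/-- The grading of a graded submodule. -/
def submodule (N : Submodule A M) (hN : ∀ m ∈ N, ∀ d, G.π d m ∈ N) : GradingProj 𝒜 N where
  π d := AddMonoidHom.mk' (fun m => ⟨G.π d m, hN m m.2 d⟩) fun m m' => Subtype.ext (by simp)
  orth d e m := Subtype.ext (by
    simp only [AddMonoidHom.mk'_apply, G.orth]
    split_ifs <;> simp)
  exists_sum m := by
    obtain ⟨s, hs⟩ := G.exists_sum (m : M)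
    exact ⟨s, Subtype.ext (by simpa using hs)⟩
  smul i d a m ha := Subtype.ext (G.smul i d a m ha)

theorem BoundedBelow.submodule {d₀ : ℤ} {G : GradingProj 𝒜 M} (h : G.BoundedBelow d₀)
    (N : Submodule A M) (hN : ∀ m ∈ N, ∀ d, G.π d m ∈ N) :
    (G.submodule N hN).BoundedBelow d₀ := fun d hd m => Subtype.ext (h d hd m)

theorem BoundedBelow.ofSurjective {d₀ : ℤ} {G : GradingProj 𝒜 M} (h : G.BoundedBelow d₀)
    {Q : Type u} [AddCommGroup Q] [Module A Q] (g : M →ₗ[A] Q)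
    (hg : Function.Surjective g) (hker : ∀ m, g m = 0 → ∀ d, g (G.π d m) = 0) :
    (G.ofSurjective g hg hker).BoundedBelow d₀ := fun d hd q => by
  obtain ⟨m, rfl⟩ := hg q
  rw [ofSurjective_apply, h d hd, map_zero]

/-- The projections attached to a graded module. -/
theorem nonempty_of_isGradedModule [GradedRing 𝒜] (ℳ : ℤ → AddSubgroup M)
    (h : IsGradedModule A 𝒜 M ℳ) : Nonempty (GradingProj 𝒜 M) := by
  classical
  let _ := h.1.chooseDecomposition
  have hadd : ∀ d m m', (decompose ℳ (m + m') d : M) = decompose ℳ m d + decompose ℳ m' d :=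
    fun d m m' => by rw [decompose_add]; rfl
  refine ⟨
    { π := fun d => AddMonoidHom.mk' (fun m => (decompose ℳ m d : M)) (hadd d)
      orth := fun d e m => ?_
      exists_sum := fun m => ⟨_, sum_support_decompose ℳ m⟩
      smul := fun i d a m ha => ?_ }⟩
  · simp only [AddMonoidHom.mk'_apply]
    split_ifs with hde
    · subst hde
      exact decompose_of_mem_same ℳ (decompose ℳ m d).2
    · exact decompose_of_mem_ne ℳ (decompose ℳ m e).2 (Ne.symm hde)
  · simp only [AddMonoidHom.mk'_apply]
    induction m using Decomposition.inductionOn ℳ with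
    | zero => simp
    | @homogeneous j m =>
      have ham := h.2 i j a m ha m.2
      by_cases hjd : j = d
      · subst hjd
        rw [decompose_of_mem_same ℳ ham, decompose_of_mem_same ℳ m.2]
      · rw [decompose_of_mem_ne ℳ ham (by omega), decompose_of_mem_ne ℳ m.2 hjd, smul_zero]
    | add m m' hm hm' => rw [_root_.smul_add, hadd, hadd, hm, hm', _root_.smul_add]

section Free

variable [GradedRing 𝒜] {ι : Type u} (deg : ι → ℤ)

theorem proj_mul {i : ℤ} {a : A} (ha : a ∈ 𝒜 i) (d : ℤ) (b : A) :
    GradedRing.proj 𝒜 (i + d) (a * b) = a * GradedRing.proj 𝒜 d b := by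
  simp only [GradedRing.proj_apply]
  exact coe_decompose_mul_add_of_left_mem 𝒜 ha

/-- Projections of the free module on generators `x` of degree `deg x`. -/
noncomputable def freeProj (𝒜 : ℤ → AddSubgroup A) [GradedRing 𝒜] (deg : ι → ℤ) (d : ℤ) :
    (ι →₀ A) →+ (ι →₀ A) :=
  Finsupp.liftAddHom fun x =>
    (Finsupp.singleAddHom x).comp (GradedRing.proj 𝒜 (d - deg x))

theorem freeProj_single (d : ℤ) (x : ι) (a : A) :
    freeProj 𝒜 deg d (Finsupp.single x a) =
      Finsupp.single x (GradedRing.proj 𝒜 (d - deg x) a) := by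
  simp [freeProj]

/-- The free graded module on generators `x` of degree `deg x`. -/
noncomputable def free (𝒜 : ℤ → AddSubgroup A) [GradedRing 𝒜] (deg : ι → ℤ) :
    GradingProj 𝒜 (ι →₀ A) where
  π := freeProj 𝒜 deg
  orth d e f := by
    induction f using Finsupp.induction_linear with
    | zero => simp
    | add f g hf hg =>
      simp only [map_add, hf, hg]
      split_ifs <;> simp
    | single x a =>
      simp only [freeProj_single, GradedRing.proj_apply]
      split_ifs with h
      · rw [h, decompose_of_mem_same 𝒜 (SetLike.coe_mem _)]
      · rw [decompose_of_mem_ne 𝒜 (SetLike.coe_mem _) (by omega), Finsupp.single_zero]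
  exists_sum f := by
    classical
    suffices h : ∃ s : Finset ℤ, ∀ t, s ⊆ t → ∑ d ∈ t, freeProj 𝒜 deg d f = f by
      obtain ⟨s, hs⟩ := h
      exact ⟨s, hs s subset_rfl⟩
    induction f using Finsupp.induction_linear with
    | zero => exact ⟨∅, by simp⟩
    | add f g hf hg =>
      obtain ⟨s, hs⟩ := hf
      obtain ⟨t, ht⟩ := hg
      refine ⟨s ∪ t, fun v hv => ?_⟩
      simp only [map_add]
      rw [Finset.sum_add_distrib, hs v (Finset.union_subset_left hv),
        ht v (Finset.union_subset_right hv)]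
    | single x a =>
      refine ⟨(decompose 𝒜 a).support.image (· + deg x), fun t ht => ?_⟩
      have h : ∑ d ∈ t.image (· - deg x), (decompose 𝒜 a d : A) = a := by
        rw [← Finset.sum_subset (s₁ := (decompose 𝒜 a).support), sum_support_decompose]
        · exact fun d hd => Finset.mem_image.mpr
            ⟨d + deg x, ht (Finset.mem_image_of_mem _ hd), by ring⟩
        · intro d _ hd
          simpa using hd
      rw [Finset.sum_image fun _ _ _ _ h => by simpa using h] at h
      simp only [freeProj_single, GradedRing.proj_apply]
      rw [← Finsupp.single_finsetSum, h]
  smul i d a f ha := by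
    induction f using Finsupp.induction_linear with
    | zero => simp
    | add f g hf hg => simp only [_root_.smul_add, map_add, hf, hg]
    | single x b =>
      rw [Finsupp.smul_single, freeProj_single, freeProj_single, Finsupp.smul_single,
        smul_eq_mul, smul_eq_mul, add_sub_assoc, proj_mul ha]

/-- The linear map out of a free graded module determined by homogeneous images of the
generators is graded. -/
theorem linearCombination_free_π (v : ι → M) (hv : ∀ x, G.π (deg x) (v x) = v x) (d : ℤ)
    (f : ι →₀ A) : Finsupp.linearCombination A v ((free 𝒜 deg).π d f) =
      G.π d (Finsupp.linearCombination A v f) := by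
  change Finsupp.linearCombination A v (freeProj 𝒜 deg d f) = _
  induction f using Finsupp.induction_linear with
  | zero => simp
  | add f g hf hg => simp only [map_add, hf, hg]
  | single x a =>
    rw [freeProj_single, Finsupp.linearCombination_single, Finsupp.linearCombination_single]
    simp only [GradedRing.proj_apply]
    induction a using Decomposition.inductionOn 𝒜 with
    | zero => simp
    | @homogeneous i a =>
      rw [G.smul_sub a.2, ← hv x, G.orth]
      by_cases h : d - i = deg x
      · rw [show d - deg x = i by omega, decompose_of_mem_same 𝒜 a.2, if_pos h]
      · rw [decompose_of_mem_ne 𝒜 a.2 (by omega), if_neg h, zero_smul, smul_zero]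
    | add a b ha hb =>
      rw [decompose_add, add_smul, map_add, ← ha, ← hb, ← add_smul]; rfl

/-- A bounded below graded module is a quotient of a bounded below free graded module. -/
theorem BoundedBelow.exists_free_cover (hneg : ∀ i : ℤ, i < 0 → 𝒜 i = ⊥) {d₀ : ℤ}
    {G : GradingProj 𝒜 M} (h : G.BoundedBelow d₀) :
    ∃ (ι : Type u) (deg : ι → ℤ) (f : (ι →₀ A) →ₗ[A] M), Function.Surjective f ∧
      (free 𝒜 deg).BoundedBelow d₀ ∧ ∀ d x, f ((free 𝒜 deg).π d x) = G.π d (f x) := by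
  refine ⟨{x : ℤ × M // d₀ ≤ x.1 ∧ G.π x.1 x.2 = x.2}, fun x => x.1.1,
    Finsupp.linearCombination A fun x => x.1.2, fun m => ?_, fun d hd f => ?_,
    fun d f => G.linearCombination_free_π _ _ (fun x => x.2.2) d f⟩
  · refine G.mem_of_forall_mem (LinearMap.range (Finsupp.linearCombination A
      fun x : {x : ℤ × M // d₀ ≤ x.1 ∧ G.π x.1 x.2 = x.2} => x.1.2)).toAddSubgroup fun d => ?_
    by_cases hd : d < d₀
    · rw [h d hd]
      exact zero_mem _
    · exact ⟨Finsupp.single ⟨(d, G.π d m), not_lt.mp hd, G.idem d m⟩ 1, by simp⟩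
  · change freeProj 𝒜 _ d f = 0
    induction f using Finsupp.induction_linear with
    | zero => simp
    | add f g hf hg => simp only [map_add, hf, hg, add_zero]
    | single x a =>
      have hx := x.2.1
      have h0 : (decompose 𝒜 a (d - x.1.1) : A) = 0 :=
        AddSubgroup.mem_bot.mp ((hneg _ (by omega)).le (SetLike.coe_mem _))
      rw [freeProj_single, GradedRing.proj_apply, h0, Finsupp.single_zero]

end Free

end GradingProj

end Projections

section Radical

/-- A module killed by the kernel of a surjection onto a semisimple ring is semisimple. -/
theorem isSemisimpleModule_of_surjective_ringHom {R B : Type u} [Ring R] [Ring B]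
    [IsSemisimpleRing B] (φ : R →+* B) (hφ : Function.Surjective φ) (Q : Type u)
    [AddCommGroup Q] [Module R Q] (hQ : ∀ r, φ r = 0 → ∀ x : Q, r • x = 0) :
    IsSemisimpleModule R Q := by
  have hT : Module.IsTorsionBySet R Q (RingHom.ker φ : Set R) := fun x r => hQ r r.2 x
  have : IsSemisimpleRing (R ⧸ RingHom.ker φ) :=
    (RingHom.quotientKerEquivOfSurjective hφ).symm.isSemisimpleRing
  let _ := hT.module
  exact hT.isSemisimpleModule_iff.mp inferInstance

variable {A : Type u} [Ring A] (𝒜 : ℤ → AddSubgroup A) [GradedRing 𝒜]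

/-- The projection of a nonnegatively graded ring onto its degree zero part. -/
def projZero (hneg : ∀ i : ℤ, i < 0 → 𝒜 i = ⊥) : A →+* 𝒜 0 where
  toFun a := decompose 𝒜 a 0
  map_zero' := by simp
  map_add' a b := by rw [decompose_add]; rfl
  map_one' := Subtype.ext (decompose_of_mem_same 𝒜 SetLike.GradedOne.one_mem)
  map_mul' a b := by
    refine Subtype.ext ?_
    change (decompose 𝒜 (a * b) 0 : A) = (decompose 𝒜 a 0 : A) * (decompose 𝒜 b 0 : A)
    induction a using Decomposition.inductionOn 𝒜 with
    | zero => simp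
    | @homogeneous i a =>
      induction b using Decomposition.inductionOn 𝒜 with
      | zero => simp
      | @homogeneous j b =>
        have hab := SetLike.GradedMul.mul_mem a.2 b.2
        by_cases hi : i < 0
        · rw [AddSubgroup.mem_bot.mp ((hneg i hi).le a.2)]
          simp
        by_cases hj : j < 0
        · rw [AddSubgroup.mem_bot.mp ((hneg j hj).le b.2)]
          simp
        by_cases hi0 : i = 0
        · by_cases hj0 : j = 0
          · subst hi0 hj0
            rw [add_zero] at hab
            rw [decompose_of_mem_same 𝒜 a.2, decompose_of_mem_same 𝒜 b.2,
              decompose_of_mem_same 𝒜 hab]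
          · rw [decompose_of_mem_ne 𝒜 b.2 hj0, decompose_of_mem_ne 𝒜 hab (by omega), mul_zero]
        · rw [decompose_of_mem_ne 𝒜 a.2 hi0, decompose_of_mem_ne 𝒜 hab (by omega), zero_mul]
      | add b b' hb hb' =>
        simp only [mul_add, decompose_add, DirectSum.add_apply, AddSubgroup.coe_add, hb, hb']
    | add a a' ha ha' =>
      simp only [add_mul, decompose_add, DirectSum.add_apply, AddSubgroup.coe_add, ha, ha']

/-- The projection of `A` onto the semisimple quotient of its degree zero part. -/
def topProj (hneg : ∀ i : ℤ, i < 0 → 𝒜 i = ⊥) : A →+* 𝒜 0 ⧸ Ring.jacobson (𝒜 0) :=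
  (Ideal.Quotient.mk (Ring.jacobson (𝒜 0))).comp (projZero 𝒜 hneg)

theorem topProj_surjective (hneg : ∀ i : ℤ, i < 0 → 𝒜 i = ⊥) : Function.Surjective (topProj 𝒜 hneg) :=
  Ideal.Quotient.mk_surjective.comp fun a =>
    ⟨a, Subtype.ext (decompose_of_mem_same 𝒜 a.2)⟩

variable {𝒜} in
theorem mem_ker_topProj_iff (hneg : ∀ i : ℤ, i < 0 → 𝒜 i = ⊥) {a : A} :
    a ∈ RingHom.ker (topProj 𝒜 hneg) ↔ decompose 𝒜 a 0 ∈ Ring.jacobson (𝒜 0) :=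
  Ideal.Quotient.eq_zero_iff_mem

variable {𝒜} in
theorem mem_ker_topProj_of_ne (hneg : ∀ i : ℤ, i < 0 → 𝒜 i = ⊥) {i : ℤ} (hi : i ≠ 0) {a : A}
    (ha : a ∈ 𝒜 i) :
    a ∈ RingHom.ker (topProj 𝒜 hneg) := by
  rw [mem_ker_topProj_iff, show decompose 𝒜 a 0 = 0 from
    Subtype.ext (decompose_of_mem_ne 𝒜 ha hi)]
  exact zero_mem _

namespace GradingProj

variable {𝒜} {M : Type u} [AddCommGroup M] [Module A M] (G : GradingProj 𝒜 M)

theorem π_sub_smul_mem (hneg : ∀ i : ℤ, i < 0 → 𝒜 i = ⊥) (N : Submodule A M) (d : ℤ)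
    (hN : ∀ e < d, ∀ m, G.π e m ∈ N) (a : A) (m : M) : G.π d ((a - decompose 𝒜 a 0) • m) ∈ N := by
  induction a using Decomposition.inductionOn 𝒜 with
  | zero => simp
  | @homogeneous i a =>
    by_cases hi0 : i = 0
    · subst hi0
      rw [decompose_of_mem_same 𝒜 a.2, sub_self, zero_smul, map_zero]
      exact zero_mem _
    by_cases hi : i < 0
    · rw [AddSubgroup.mem_bot.mp ((hneg i hi).le a.2)]
      simp
    · rw [decompose_of_mem_ne 𝒜 a.2 hi0, sub_zero, G.smul_sub a.2]
      exact N.smul_mem _ (hN _ (by omega) _)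
  | add a b ha hb =>
    rw [decompose_add, DirectSum.add_apply, AddSubgroup.coe_add, add_sub_add_comm, add_smul,
      map_add]
    exact add_mem ha hb

/-- An endomorphism of a bounded below graded module that preserves degrees and has image in
the radical is locally nilpotent. -/
theorem BoundedBelow.exists_pow_eq_zero {G : GradingProj 𝒜 M} {d₀ : ℤ} (h : G.BoundedBelow d₀)
    (hneg : ∀ i : ℤ, i < 0 → 𝒜 i = ⊥) (hart : IsArtinianRing (𝒜 0)) (ν : Module.End A M)
    (hν : ∀ d m, ∃ w ∈ RingHom.ker (topProj 𝒜 hneg) • (⊤ : Submodule A M),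
      ν (G.π d m) = G.π d w) (x : M) : ∃ k, (ν ^ k) x = 0 := by
  obtain ⟨N, hN⟩ := IsSemiprimaryRing.isNilpotent (R := 𝒜 0)
  have step : ∀ (d : ℤ) (k : ℕ), (∀ e < d, ∀ m, (ν ^ k) (G.π e m) = 0) →
      ∀ m, (ν ^ (k + N)) (G.π d m) = 0 := by
    intro d k hk
    have hstable : ∀ t, ∀ z ∈ LinearMap.ker (ν ^ k), (ν ^ t) z ∈ LinearMap.ker (ν ^ k) := by
      intro t z hz
      rw [LinearMap.mem_ker, ← Module.End.mul_apply, ← pow_add, add_comm, pow_add,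
        Module.End.mul_apply, LinearMap.mem_ker.mp hz, map_zero]
    have key : ∀ t j, t + j = N → ∀ y ∈ Ring.jacobson (𝒜 0) ^ j, ∀ m,
        (ν ^ t) ((y : A) • G.π d m) ∈ LinearMap.ker (ν ^ k) := by
      intro t
      induction t with
      | zero =>
        intro j hj y hy m
        rw [show j = N by omega, hN] at hy
        have hy0 : y = 0 := hy
        simp [hy0]
      | succ t ih =>
        intro j hj y hy m
        obtain ⟨w, hw, hνw⟩ := hν d m
        rw [pow_succ, Module.End.mul_apply, map_smul, hνw]
        clear hνw
        refine Submodule.smul_induction_on hw (fun a ha n _ => ?_) fun w w' hw hw' => ?_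
        · rw [mem_ker_topProj_iff] at ha
          have hsplit : a • n = (decompose 𝒜 a 0 : A) • n + (a - decompose 𝒜 a 0) • n := by
            rw [← add_smul, add_sub_cancel]
          rw [hsplit, map_add, _root_.smul_add, map_add]
          refine add_mem ?_ (hstable t _ (Submodule.smul_mem _ _
            (G.π_sub_smul_mem hneg _ d (fun e he m => hk e he m) a n)))
          rw [G.smul_sub (decompose 𝒜 a 0).2, sub_zero, smul_smul]
          exact ih (j + 1) (by omega) (y * decompose 𝒜 a 0)
            (by rw [Submodule.pow_succ]; exact Submodule.mul_mem_mul hy ha) n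
        · rw [map_add, _root_.smul_add, map_add]
          exact add_mem hw hw'
    intro m
    have := key N 0 (add_zero N) 1 (by rw [Submodule.pow_zero, Ideal.one_eq_top]; trivial) m
    rw [LinearMap.mem_ker, ← Module.End.mul_apply, ← pow_add] at this
    simpa using this
  have hdeg : ∀ n : ℕ, ∃ k, ∀ e < d₀ + n, ∀ m, (ν ^ k) (G.π e m) = 0 := by
    intro n
    induction n with
    | zero => exact ⟨0, fun e he m => by rw [h e (by simpa using he), map_zero]⟩
    | succ n ih =>
      obtain ⟨k, hk⟩ := ih
      refine ⟨k + N, fun e he m => ?_⟩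
      by_cases hen : e < d₀ + n
      · rw [add_comm, pow_add, Module.End.mul_apply, hk e hen, map_zero]
      · rw [show e = d₀ + n by push_cast at he; omega]
        exact step _ k hk m
  obtain ⟨s, hs⟩ := G.exists_sum x
  choose k hk using fun d : ℤ => hdeg (d - d₀ + 1).toNat
  refine ⟨s.sup k, ?_⟩
  rw [← hs, map_sum]
  refine Finset.sum_eq_zero fun d hd => ?_
  obtain ⟨c, hc⟩ := Nat.exists_eq_add_of_le (Finset.le_sup (f := k) hd)
  rw [hc, add_comm, pow_add, Module.End.mul_apply, hk d d (by omega), map_zero]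

end GradingProj

end Radical

section KeyLemma

open MulOpposite

variable {A : Type u} [Ring A] {𝒜 : ℤ → AddSubgroup A} [GradedRing 𝒜]

theorem isSemisimpleModule_of_ker_topProj (hneg : ∀ i : ℤ, i < 0 → 𝒜 i = ⊥)
    (hart : IsArtinianRing (𝒜 0)) (Q : Type u) [AddCommGroup Q] [Module A Q]
    (hQ : ∀ a ∈ RingHom.ker (topProj 𝒜 hneg), ∀ x : Q, a • x = 0) : IsSemisimpleModule A Q :=
  isSemisimpleModule_of_surjective_ringHom _ (topProj_surjective 𝒜 hneg) Q hQ

theorem isSemisimpleModule_op_of_ker_topProj (hneg : ∀ i : ℤ, i < 0 → 𝒜 i = ⊥)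
    (hart : IsArtinianRing (𝒜 0)) (Q : Type u) [AddCommGroup Q] [Module Aᵐᵒᵖ Q]
    (hQ : ∀ a ∈ RingHom.ker (topProj 𝒜 hneg), ∀ x : Q, op a • x = 0) :
    IsSemisimpleModule Aᵐᵒᵖ Q :=
  isSemisimpleModule_of_surjective_ringHom (RingHom.op (topProj 𝒜 hneg))
    (fun b => by
      obtain ⟨a, ha⟩ := topProj_surjective 𝒜 hneg b.unop
      exact ⟨op a, unop_injective ha⟩) Q
    fun a ha x => hQ a.unop (op_injective ha) x

/-- In a semisimple module of characters, simple submodules separate points. -/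
theorem DualOfLeft.exists_simple (V : Type u) [AddCommGroup V] [Module A V]
    (hV : IsSemisimpleModule Aᵐᵒᵖ (DualOfLeft V)) {v : V} (hv : v ≠ 0) :
    ∃ S : Submodule Aᵐᵒᵖ (DualOfLeft V), IsSimpleModule Aᵐᵒᵖ S ∧ ∃ χ ∈ S, χ v ≠ 0 := by
  by_contra! hS
  obtain ⟨χ, hχ⟩ := CharacterModule.exists_character_apply_ne_zero_of_ne_zero hv
  have hmem : ∀ ψ : DualOfLeft V, ψ v = 0 := by
    intro ψ
    have : ψ ∈ sSup {S : Submodule Aᵐᵒᵖ (DualOfLeft V) | IsSimpleModule Aᵐᵒᵖ S} := by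
      rw [IsSemisimpleModule.sSup_simples_eq_top]
      trivial
    rw [sSup_eq_iSup'] at this
    induction this using Submodule.iSup_induction' with
    | mem S ψ hψ => exact hS S S.2 ψ hψ
    | zero => rfl
    | add ψ ψ' _ _ h h' =>
      change ψ v + ψ' v = 0
      rw [h, h', add_zero]
  exact hχ (hmem χ)

/-- Evaluation of characters, on the level of a submodule of the character module. -/
def DualOfLeft.eval {V : Type u} [AddCommGroup V] [Module A V]
    (S : Submodule Aᵐᵒᵖ (DualOfLeft V)) : V →ₗ[A] DualOfRight S where
  toFun v := AddMonoidHom.mk' (fun s : S => (s : DualOfLeft V) v) fun _ _ => rfl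
  map_add' v w := DualOfRight.ext fun s => map_add (s : DualOfLeft V) v w
  map_smul' _ _ := rfl

/-- If characters of all simple right modules killed by the radical extend from `L` to `F`, then
`L` meets the radical of `F` in the radical of `L`. -/
theorem mem_smul_top_of_extends (hneg : ∀ i : ℤ, i < 0 → 𝒜 i = ⊥) (hart : IsArtinianRing (𝒜 0))
    {F : Type u} [AddCommGroup F] [Module A F] (L : Submodule A F)
    (hext : ∀ (S : Type u) [AddCommGroup S] [Module Aᵐᵒᵖ S], IsSimpleModule Aᵐᵒᵖ S →
      (∀ a ∈ RingHom.ker (topProj 𝒜 hneg), ∀ s : S, op a • s = 0) →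
      ∀ h : L →ₗ[A] DualOfRight S, ∃ H : F →ₗ[A] DualOfRight S, ∀ x : L, H x = h x)
    (l : L) (hl : (l : F) ∈ RingHom.ker (topProj 𝒜 hneg) • (⊤ : Submodule A F)) :
    l ∈ RingHom.ker (topProj 𝒜 hneg) • (⊤ : Submodule A L) := by
  by_contra hl'
  set V := L ⧸ (RingHom.ker (topProj 𝒜 hneg) • (⊤ : Submodule A L))
  have hV : ∀ a ∈ RingHom.ker (topProj 𝒜 hneg), ∀ v : V, a • v = 0 := by
    intro a ha v
    obtain ⟨y, rfl⟩ := Submodule.mkQ_surjective _ v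
    rw [← map_smul]
    exact (Submodule.Quotient.mk_eq_zero _).mpr (Submodule.smul_mem_smul ha trivial)
  have hdual : ∀ a ∈ RingHom.ker (topProj 𝒜 hneg), ∀ χ : DualOfLeft V, op a • χ = 0 :=
    fun a ha χ => DualOfLeft.ext fun v => by
      rw [DualOfLeft.smul_apply, unop_op, hV a ha, map_zero]
      rfl
  obtain ⟨S, hS, χ, hχS, hχ⟩ := DualOfLeft.exists_simple V
    (isSemisimpleModule_op_of_ker_topProj hneg hart _ hdual)
    (v := Submodule.Quotient.mk l) (by rwa [Ne, Submodule.Quotient.mk_eq_zero])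
  have hkill : ∀ a ∈ RingHom.ker (topProj 𝒜 hneg), ∀ s : S, op a • s = 0 :=
    fun a ha s => Subtype.ext (hdual a ha s)
  obtain ⟨H, hH⟩ := hext S hS hkill (DualOfLeft.eval S ∘ₗ Submodule.mkQ _)
  have hH0 : H l = 0 := by
    refine Submodule.smul_induction_on (p := fun x => H x = 0) hl (fun a ha x _ => ?_)
      fun x y hx hy => by rw [map_add, hx, hy, add_zero]
    rw [map_smul]
    refine DualOfRight.ext fun s => ?_
    rw [DualOfRight.smul_apply, hkill a ha, map_zero]
    rfl
  rw [hH] at hH0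
  exact hχ (DFunLike.congr_fun hH0 ⟨χ, hχS⟩)

/-- A submodule `L` of a projective module `F` with `L ∩ mF = mL` is a retract of `F` modulo the
radical `m`. -/
theorem exists_retraction_mod_smul_top (hneg : ∀ i : ℤ, i < 0 → 𝒜 i = ⊥)
    (hart : IsArtinianRing (𝒜 0))
    {F : Type u} [AddCommGroup F] [Module A F] [Module.Projective A F] (L : Submodule A F)
    (hL : ∀ l : L, (l : F) ∈ RingHom.ker (topProj 𝒜 hneg) • (⊤ : Submodule A F) →
      l ∈ RingHom.ker (topProj 𝒜 hneg) • (⊤ : Submodule A L)) :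
    ∃ φ : F →ₗ[A] L, ∀ l : L, l - φ l ∈ RingHom.ker (topProj 𝒜 hneg) • (⊤ : Submodule A L) := by
  set m := RingHom.ker (topProj 𝒜 hneg)
  have hle : m • (⊤ : Submodule A L) ≤ (m • (⊤ : Submodule A F)).comap L.subtype := by
    rw [Submodule.smul_le]
    exact fun a ha x _ => Submodule.smul_mem_smul ha trivial
  let j := Submodule.mapQ _ _ L.subtype hle
  have hj : Function.Injective j := by
    rw [injective_iff_map_eq_zero]
    intro v hv
    obtain ⟨l, rfl⟩ := Submodule.mkQ_surjective _ v
    exact (Submodule.Quotient.mk_eq_zero _).mpr (hL l ((Submodule.Quotient.mk_eq_zero _).mp hv))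
  have : IsSemisimpleModule A (F ⧸ m • (⊤ : Submodule A F)) := by
    refine isSemisimpleModule_of_ker_topProj hneg hart _ fun a ha v => ?_
    obtain ⟨y, rfl⟩ := Submodule.mkQ_surjective _ v
    rw [← map_smul]
    exact (Submodule.Quotient.mk_eq_zero _).mpr (Submodule.smul_mem_smul ha trivial)
  obtain ⟨r, hr⟩ := IsSemisimpleModule.extension_property j hj LinearMap.id
  obtain ⟨φ, hφ⟩ := Module.projective_lifting_property
    (Submodule.mkQ (m • (⊤ : Submodule A L))) (r ∘ₗ Submodule.mkQ _) (Submodule.mkQ_surjective _)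
  refine ⟨φ, fun l => (Submodule.Quotient.eq _).mp ?_⟩
  exact ((LinearMap.congr_fun hφ (l : F)).trans
    (LinearMap.congr_fun hr (Submodule.Quotient.mk l))).symm

/-- An endomorphism that differs from the identity by a locally nilpotent one is bijective. -/
theorem bijective_of_locally_nilpotent {L : Type u} [AddCommGroup L] [Module A L]
    (ψ : Module.End A L) (h : ∀ x, ∃ k, ((1 - ψ : Module.End A L) ^ k) x = 0) : Function.Bijective ψ := by
  constructor
  · rw [injective_iff_map_eq_zero]
    intro x hx
    obtain ⟨k, hk⟩ := h x
    have hfix : ∀ k, ((1 - ψ : Module.End A L) ^ k) x = x := by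
      intro k
      induction k with
      | zero => rfl
      | succ k ih => rw [pow_succ, Module.End.mul_apply, LinearMap.sub_apply, hx, sub_zero,
          Module.End.one_apply, ih]
    exact (hfix k).symm.trans hk
  · intro x
    obtain ⟨k, hk⟩ := h x
    refine ⟨(∑ i ∈ Finset.range k, (1 - ψ) ^ i) x, ?_⟩
    have := LinearMap.congr_fun (mul_neg_geom_sum (1 - ψ) k) x
    rwa [sub_sub_cancel, Module.End.mul_apply, LinearMap.sub_apply, hk, sub_zero] at this

/-- A quotient of a projective module by a retract is projective. -/
theorem projective_of_retraction {F K : Type u} [AddCommGroup F] [Module A F]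
    [Module.Projective A F] [AddCommGroup K] [Module A K] (f : F →ₗ[A] K)
    (hf : Function.Surjective f) (r : F →ₗ[A] LinearMap.ker f)
    (hr : Function.Bijective (r ∘ₗ (LinearMap.ker f).subtype)) : Module.Projective A K := by
  let e := LinearEquiv.ofBijective _ hr
  have he : ∀ l : LinearMap.ker f, e.symm (r l) = l := fun l => e.symm_apply_apply l
  let t : F →ₗ[A] F := LinearMap.id - (LinearMap.ker f).subtype ∘ₗ e.symm.toLinearMap ∘ₗ r
  have ht : LinearMap.ker f ≤ LinearMap.ker t := fun l hl => by
    change l - ((e.symm (r l) : LinearMap.ker f) : F) = 0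
    rw [he ⟨l, hl⟩, sub_self]
  refine Module.Projective.of_split
    ((LinearMap.ker f).liftQ t ht ∘ₗ (f.quotKerEquivOfSurjective hf).symm.toLinearMap) f ?_
  ext y
  obtain ⟨x, rfl⟩ := hf y
  have hx : (f.quotKerEquivOfSurjective hf).symm (f x) = Submodule.Quotient.mk x := by
    rw [LinearEquiv.symm_apply_eq]
    rfl
  change f ((LinearMap.ker f).liftQ t ht ((f.quotKerEquivOfSurjective hf).symm (f x))) = f x
  rw [hx, Submodule.liftQ_apply]
  change f (x - ((e.symm (r x) : LinearMap.ker f) : F)) = f x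
  rw [map_sub, LinearMap.mem_ker.mp (e.symm (r x)).2, sub_zero]

/-- A map from a free graded module has a degree-preserving part. -/
theorem GradingProj.exists_graded_part {ι M : Type u} [AddCommGroup M] [Module A M]
    (G : GradingProj 𝒜 M) (deg : ι → ℤ) (φ : (ι →₀ A) →ₗ[A] M) :
    ∃ φ₀ : (ι →₀ A) →ₗ[A] M, ∀ d f,
      φ₀ ((free 𝒜 deg).π d f) = G.π d (φ ((free 𝒜 deg).π d f)) := by
  refine ⟨Finsupp.linearCombination A fun x => G.π (deg x) (φ (Finsupp.single x 1)),
    fun d f => ?_⟩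
  change Finsupp.linearCombination A _ (freeProj 𝒜 deg d f) = G.π d (φ (freeProj 𝒜 deg d f))
  induction f using Finsupp.induction_linear with
  | zero => simp
  | add f g hf hg => simp only [map_add, hf, hg]
  | single x a =>
    have ha : GradedRing.proj 𝒜 (d - deg x) a ∈ 𝒜 (d - deg x) := SetLike.coe_mem _
    rw [freeProj_single, Finsupp.linearCombination_single]
    conv_rhs => rw [← mul_one (GradedRing.proj 𝒜 (d - deg x) a), ← smul_eq_mul,
      ← Finsupp.smul_single, map_smul, G.smul_sub ha, sub_sub_cancel]

/-- The degree-preserving part of a retraction modulo the radical is invertible on a bounded below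
graded submodule. -/
theorem GradingProj.BoundedBelow.bijective_of_sub_mem (hneg : ∀ i : ℤ, i < 0 → 𝒜 i = ⊥)
    (hart : IsArtinianRing (𝒜 0)) {F : Type u} [AddCommGroup F] [Module A F]
    {L : Submodule A F} {G : GradingProj 𝒜 L} {d₀ : ℤ} (h : G.BoundedBelow d₀) (φ : F →ₗ[A] L)
    (hφ : ∀ l : L, l - φ l ∈ RingHom.ker (topProj 𝒜 hneg) • (⊤ : Submodule A L))
    (φ₀ : F →ₗ[A] L) (hφ₀ : ∀ d l, φ₀ (G.π d l) = G.π d (φ (G.π d l))) :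
    Function.Bijective (φ₀ ∘ₗ L.subtype) := by
  refine bijective_of_locally_nilpotent _
    (h.exists_pow_eq_zero hneg hart _ fun d l => ⟨_, hφ (G.π d l), ?_⟩)
  rw [map_sub, G.idem]
  exact congrArg (G.π d l - ·) (hφ₀ d l)

/-- Graded Nakayama-type criterion: a bounded below graded module with vanishing first `Ext`
against the duals of the simple right modules killed by the radical is projective. -/
theorem GradingProj.BoundedBelow.projective (hneg : ∀ i : ℤ, i < 0 → 𝒜 i = ⊥)
    (hart : IsArtinianRing (𝒜 0)) {K : Type u} [AddCommGroup K] [Module A K]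
    {G : GradingProj 𝒜 K} {d₀ : ℤ} (h : G.BoundedBelow d₀)
    (hE : ∀ (S : Type u) [AddCommGroup S] [Module Aᵐᵒᵖ S], IsSimpleModule Aᵐᵒᵖ S →
      (∀ a ∈ RingHom.ker (topProj 𝒜 hneg), ∀ s : S, op a • s = 0) →
      ExtVanishes A (DualOfRight S) 0 K) : Module.Projective A K := by
  obtain ⟨ι, deg, f, hf, hF, hfπ⟩ := h.exists_free_cover hneg
  have hker : ∀ x ∈ LinearMap.ker f, ∀ d, (free 𝒜 deg).π d x ∈ LinearMap.ker f := fun x hx d => by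
    rw [LinearMap.mem_ker, hfπ, LinearMap.mem_ker.mp hx, map_zero]
  set GK := (free 𝒜 deg).submodule (LinearMap.ker f) hker
  have hK : GK.BoundedBelow d₀ := hF.submodule _ hker
  obtain ⟨φ, hφ⟩ := exists_retraction_mod_smul_top hneg hart (LinearMap.ker f)
    (mem_smul_top_of_extends hneg hart _ fun S _ _ hS hS' => hE S hS hS' _ f hf)
  obtain ⟨φ₀, hφ₀⟩ := GK.exists_graded_part deg φ
  exact projective_of_retraction f hf φ₀ (hK.bijective_of_sub_mem hneg hart φ hφ φ₀
    fun d l => hφ₀ d l)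

theorem GradingProj.BoundedBelow.pdLE (hneg : ∀ i : ℤ, i < 0 → 𝒜 i = ⊥)
    (hart : IsArtinianRing (𝒜 0)) (n : ℕ) : ∀ {K : Type u} [AddCommGroup K] [Module A K]
    {G : GradingProj 𝒜 K} {d₀ : ℤ}, G.BoundedBelow d₀ →
    (∀ (S : Type u) [AddCommGroup S] [Module Aᵐᵒᵖ S], IsSimpleModule Aᵐᵒᵖ S →
      (∀ a ∈ RingHom.ker (topProj 𝒜 hneg), ∀ s : S, op a • s = 0) →
      ExtVanishes A (DualOfRight S) n K) → pdLE A n K := by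
  induction n with
  | zero => exact fun h hE => h.projective hneg hart hE
  | succ n ih =>
    intro K _ _ G d₀ h hE
    obtain ⟨ι, deg, f, hf, hF, hfπ⟩ := h.exists_free_cover hneg
    have hker : ∀ x ∈ LinearMap.ker f, ∀ d, (free 𝒜 deg).π d x ∈ LinearMap.ker f :=
      fun x hx d => by rw [LinearMap.mem_ker, hfπ, LinearMap.mem_ker.mp hx, map_zero]
    exact ⟨_, _, _, f, inferInstance, hf, ih (hF.submodule _ hker)
      fun S _ _ hS hS' => hE S hS hS' _ f inferInstance hf⟩

end KeyLemma

section Main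

open MulOpposite

variable {A : Type u} [Ring A] {𝒜 : ℤ → AddSubgroup A} [GradedRing 𝒜]

/-- The grading of an abelian group concentrated in degree zero. -/
def degreeZero (S : Type u) [AddCommGroup S] (j : ℤ) : AddSubgroup S := if j = 0 then ⊤ else ⊥

theorem isInternal_degreeZero (S : Type u) [AddCommGroup S] :
    DirectSum.IsInternal (degreeZero S) := by
  constructor
  · rw [injective_iff_map_eq_zero]
    intro x hx
    have hx' : x = DirectSum.of (fun j => degreeZero S j) 0 (x 0) := by
      ext j : 1
      by_cases hj : j = 0
      · subst hj
        exact (DirectSum.of_eq_same (β := fun j => degreeZero S j) 0 (x 0)).symm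
      · have h := (x j).2
        rw [DirectSum.of_eq_of_ne _ _ _ hj]
        refine Subtype.ext ?_
        simpa [degreeZero, hj] using h
    rw [hx', DirectSum.coeAddMonoidHom_of] at hx
    rw [hx', show x 0 = 0 from Subtype.ext hx, map_zero]
  · intro s
    exact ⟨DirectSum.of (fun j => degreeZero S j) 0 ⟨s, by simp [degreeZero]⟩,
      by rw [DirectSum.coeAddMonoidHom_of]⟩

/-- A simple right module killed by the radical is graded simple, concentrated in degree zero. -/
theorem isGradedSimpleRight_of_isSimpleModule (hneg : ∀ i : ℤ, i < 0 → 𝒜 i = ⊥) (S : Type u)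
    [AddCommGroup S] [Module Aᵐᵒᵖ S] (hS : IsSimpleModule Aᵐᵒᵖ S)
    (hkill : ∀ a ∈ RingHom.ker (topProj 𝒜 hneg), ∀ s : S, op a • s = 0) :
    IsGradedSimpleRight A 𝒜 S (degreeZero S) := by
  refine ⟨⟨isInternal_degreeZero S, fun i j a s ha hs => ?_⟩, IsSimpleModule.nontrivial Aᵐᵒᵖ S,
    fun p _ => eq_bot_or_eq_top p⟩
  by_cases hi : i = 0
  · subst hi
    rw [add_zero]
    unfold degreeZero at hs ⊢
    split_ifs at hs ⊢ with hj
    · trivial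
    · rw [AddSubgroup.mem_bot.mp hs, smul_zero]
      exact zero_mem _
  · rw [hkill a (mem_ker_topProj_of_ne hneg hi ha)]
    exact zero_mem _

namespace GradingProj

variable {X : Type u} [AddCommGroup X] [Module A X] (G : GradingProj 𝒜 X)

/-- The submodule of elements without components in degrees below `d₀`. -/
def truncGE (hneg : ∀ i : ℤ, i < 0 → 𝒜 i = ⊥) (d₀ : ℤ) : Submodule A X where
  carrier := {x | ∀ d < d₀, G.π d x = 0}
  zero_mem' := fun d _ => map_zero _
  add_mem' := fun hx hy d hd => by rw [map_add, hx d hd, hy d hd, add_zero]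
  smul_mem' a x hx d hd := by
    induction a using Decomposition.inductionOn 𝒜 with
    | zero => simp
    | @homogeneous i a =>
      by_cases hi : i < 0
      · rw [AddSubgroup.mem_bot.mp ((hneg i hi).le a.2), zero_smul, map_zero]
      · rw [G.smul_sub a.2, hx _ (by omega), smul_zero]
    | add a b ha hb => rw [add_smul, map_add, ha, hb, add_zero]

theorem π_mem_truncGE (hneg : ∀ i : ℤ, i < 0 → 𝒜 i = ⊥) (d₀ : ℤ) {x : X}
    (hx : x ∈ G.truncGE hneg d₀) (d : ℤ) : G.π d x ∈ G.truncGE hneg d₀ := fun e he => by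
  rw [G.orth]
  split_ifs with h
  · subst h
    exact hx e he
  · rfl

theorem truncGE_mono (hneg : ∀ i : ℤ, i < 0 → 𝒜 i = ⊥) {d e : ℤ} (h : d ≤ e) :
    G.truncGE hneg e ≤ G.truncGE hneg d := fun _ hx c hc => hx c (hc.trans_le h)

theorem exists_mem_truncGE (hneg : ∀ i : ℤ, i < 0 → 𝒜 i = ⊥) (x : X) :
    ∃ k : ℕ, x ∈ G.truncGE hneg (-k) := by
  obtain ⟨s, hs, -⟩ := G.exists_finset x
  refine ⟨s.sup Int.natAbs, fun d hd => hs d fun hds => ?_⟩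
  have := Finset.le_sup (f := Int.natAbs) hds
  omega

/-- The exhaustive filtration by the truncations, shifted to start with zero. -/
def truncFiltration (hneg : ∀ i : ℤ, i < 0 → 𝒜 i = ⊥) : ℕ → Submodule A X
  | 0 => ⊥
  | k + 1 => G.truncGE hneg (-k)

/-- If all bounded below graded modules have projective dimension at most `n`, so do all graded
modules. -/
theorem pdLE_of_boundedBelow (G : GradingProj 𝒜 X) (hneg : ∀ i : ℤ, i < 0 → 𝒜 i = ⊥) (n : ℕ)
    (hb : ∀ (K : Type u) [AddCommGroup K] [Module A K] (G : GradingProj 𝒜 K) (d₀ : ℤ),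
      G.BoundedBelow d₀ → _root_.pdLE A n K) : _root_.pdLE A n X := by
  have hπ : ∀ k, ∀ x ∈ G.truncFiltration hneg k, ∀ d, G.π d x ∈ G.truncFiltration hneg k := by
    rintro (_ | k) x hx d
    · rw [(Submodule.mem_bot A).mp hx, map_zero]
      exact zero_mem _
    · exact G.π_mem_truncGE hneg _ hx d
  let E : ExhaustiveFiltration A X fun k => G.truncFiltration hneg (k + 1) ⧸
      (G.truncFiltration hneg k).comap (G.truncFiltration hneg (k + 1)).subtype :=
    { T := G.truncFiltration hneg
      zero := rfl
      le_succ := by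
        rintro (_ | k)
        · exact bot_le
        · exact G.truncGE_mono hneg (by push_cast; omega)
      exhaustive := fun x => by
        obtain ⟨k, hk⟩ := G.exists_mem_truncGE hneg x
        exact ⟨k + 1, hk⟩
      q := fun k => Submodule.mkQ _
      surjective := fun k => Submodule.mkQ_surjective _
      ker := fun k x => Submodule.Quotient.mk_eq_zero _ }
  refine E.pdLE n fun k => ?_
  have hbd : (G.submodule _ (hπ (k + 1))).BoundedBelow (-k) :=
    fun d hd x => Subtype.ext (x.2 d hd)
  refine hb _ _ _ (hbd.ofSurjective (Submodule.mkQ _) (Submodule.mkQ_surjective _)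
    fun x hx d => ?_)
  have hx' : (x : X) ∈ G.truncFiltration hneg k :=
    Submodule.mem_comap.mp ((Submodule.Quotient.mk_eq_zero _).mp hx)
  exact (Submodule.Quotient.mk_eq_zero _).mpr (Submodule.mem_comap.mpr (hπ k x hx' d))

end GradingProj

end Main

theorem stmt_1 (A : Type u) [Ring A] (𝒜 : ℤ → AddSubgroup A) [GradedRing 𝒜]
    (hneg : ∀ i : ℤ, i < 0 → 𝒜 i = ⊥)
    (hart : IsArtinianRing ↥(𝒜 0)) (ℓ : ℕ)
    (hsimple : ∀ (M : Type u) [AddCommGroup M] [Module Aᵐᵒᵖ M] (ℳ : ℤ → AddSubgroup M),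
      IsGradedSimpleRight A 𝒜 M ℳ → projDim Aᵐᵒᵖ M ≤ (ℓ : ℕ∞))
    (X : Type u) [AddCommGroup X] [Module A X] (𝒳 : ℤ → AddSubgroup X)
    (hX : IsGradedModule A 𝒜 X 𝒳) :
    projDim A X ≤ (ℓ : ℕ∞) := by
  obtain ⟨G⟩ := GradingProj.nonempty_of_isGradedModule 𝒳 hX
  refine (projDim_le_iff ℓ X).mpr (G.pdLE_of_boundedBelow hneg ℓ fun K _ _ _ _ hK =>
    hK.pdLE hneg hart ℓ fun S _ _ hS hkill => ExtVanishes.of_pdLE_dual A ℓ S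
      ((projDim_le_iff ℓ S).mp (hsimple S _
        (isGradedSimpleRight_of_isSimpleModule hneg S hS hkill))) K)
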